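/- arXiv:1912.07201 — 3 statements merged into one kernel-verified Lean document; each statement's English description precedes it below -/
import Mathlib

section
/- For σ ∈ [0, 2π], Ls_{2,1}^{(0,0)}(σ) = (i/4)πσ² - (i/12)σ³ - iσζ(2) - ζ(3) + Li₃(e^{iσ}). -/
/-!
For real `θ` one has `log |2 sin (θ/2)| = log ‖1 - e^{iθ}‖`, the boundary value as `r ↑ 1` of
`log ‖1 - r e^{iθ}‖ = -∑ rⁿ cos (nθ) / n`. The latter series converges uniformly in `θ` for each
`r < 1`, so it may be integrated termwise. In the limit `r ↑ 1` the integrals converge by dominated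
convergence, the majorant `log 2 - log |sin θ|` coming from
`|sin θ| ≤ ‖1 - r e^{iθ}‖ ≤ 2`, and the series by Tannery's theorem. This gives the inner integral
`-∑ sin (nθ) / n²`, valid for every real `θ`. A second termwise integration yields
`∑ cos (nσ) / n³ - ζ(3)`, which is the real part of `Li₃(e^{iσ}) - ζ(3)`.

The remaining terms of the formula cancel the imaginary part of `Li₃(e^{iσ})`: on `[0, 2π]`,
`∑ sin (nσ) / n³` is the Fourier series of a multiple of the third Bernoulli polynomial.

All series are indexed by `ℕ`; the term `n = 0` vanishes because of division by zero.
-/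

open Complex Real

/-- The polylogarithm `Li_k(z) = Σ_{m≥1} z^m/m^k`. -/
noncomputable def Li (k : ℕ) (z : ℂ) : ℂ := ∑' m : ℕ+, z ^ (m : ℕ) / (m : ℂ) ^ k

open MeasureTheory Filter Topology

lemma abs_log_le_of_mem {a x : ℝ} (ha : 0 < a) (ha1 : a ≤ 1) (h1 : a ≤ x) (h2 : x ≤ 2) :
    |Real.log x| ≤ Real.log 2 - Real.log a := by
  have hl2 : 0 ≤ Real.log 2 := Real.log_nonneg (by norm_num)
  have hla : Real.log a ≤ 0 := Real.log_nonpos ha.le ha1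
  have hx1 := Real.log_le_log ha h1
  have hx2 := Real.log_le_log (ha.trans_le h1) h2
  rw [abs_le]
  constructor <;> linarith

/-- The distance from `1` to the line through `0` and `e^{it}` is `|sin t|`. -/
lemma abs_sin_le_norm_one_sub (r t : ℝ) :
    |Real.sin t| ≤ ‖1 - (r : ℂ) * Complex.exp (t * Complex.I)‖ := by
  have h : ‖1 - (r : ℂ) * Complex.exp (t * Complex.I)‖ =
      √((1 - r * Real.cos t) ^ 2 + (r * Real.sin t) ^ 2) := by
    rw [Complex.norm_eq_sqrt_sq_add_sq]
    simp [Complex.exp_re, Complex.exp_im]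
  rw [h]
  apply Real.abs_le_sqrt
  nlinarith [Real.sin_sq_add_cos_sq t, sq_nonneg (r - Real.cos t)]

lemma hasSum_log_norm_one_sub {r : ℝ} (hr0 : 0 ≤ r) (hr1 : r < 1) (t : ℝ) :
    HasSum (fun n : ℕ ↦ -(r ^ n * Real.cos (n * t) / n))
      (Real.log ‖1 - (r : ℂ) * Complex.exp (t * Complex.I)‖) := by
  have hz : ‖(r : ℂ) * Complex.exp (t * Complex.I)‖ < 1 := by
    simpa [Complex.norm_exp_ofReal_mul_I, abs_of_nonneg hr0] using hr1
  have h := (Complex.hasSum_re (Complex.hasSum_taylorSeries_neg_log hz)).neg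
  rw [Complex.neg_re, neg_neg, Complex.log_re] at h
  refine h.congr_fun fun n ↦ ?_
  have e : ((r : ℂ) * Complex.exp (t * Complex.I)) ^ n / n =
      ((r ^ n / n : ℝ) : ℂ) * Complex.exp ((n * t : ℝ) * Complex.I) := by
    rw [mul_pow, ← Complex.exp_nat_mul]
    push_cast
    ring_nf
  rw [e, Complex.re_ofReal_mul, Complex.exp_ofReal_mul_I_re]
  ring

lemma hasSum_integral_log_norm_one_sub {r : ℝ} (hr0 : 0 ≤ r) (hr1 : r < 1) (θ : ℝ) :
    HasSum (fun n : ℕ ↦ -(r ^ n * Real.sin (n * θ) / n ^ 2))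
      (∫ t in (0:ℝ)..θ, Real.log ‖1 - (r : ℂ) * Complex.exp (t * Complex.I)‖) := by
  have h := intervalIntegral.hasSum_integral_of_dominated_convergence (μ := volume)
    (a := 0) (b := θ) (F := fun (n : ℕ) t ↦ -(r ^ n * Real.cos (n * t) / n))
    (f := fun t ↦ Real.log ‖1 - (r : ℂ) * Complex.exp (t * Complex.I)‖)
    (fun n _ ↦ r ^ n) (fun n ↦ by fun_prop) ?_ ?_ ?_ ?_
  · refine h.congr_fun fun n ↦ ?_
    rcases eq_or_ne n 0 with rfl | hn
    · simp
    have hn' : (n : ℝ) ≠ 0 := by exact_mod_cast hn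
    rw [intervalIntegral.integral_neg, intervalIntegral.integral_div,
      intervalIntegral.integral_const_mul,
      intervalIntegral.integral_comp_mul_left (fun x ↦ Real.cos x) hn']
    simp
    field_simp
  · refine fun n ↦ .of_forall fun t _ ↦ ?_
    rw [norm_neg, norm_div, norm_mul, norm_pow, Real.norm_of_nonneg hr0, Real.norm_natCast,
      Real.norm_eq_abs]
    rcases eq_or_ne n 0 with rfl | hn
    · simp
    have hn' : (1 : ℝ) ≤ n := by exact_mod_cast Nat.one_le_iff_ne_zero.2 hn
    have hp : 0 ≤ r ^ n := by positivity
    calc r ^ n * |Real.cos (n * t)| / n ≤ r ^ n * |Real.cos (n * t)| :=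
          div_le_self (by positivity) hn'
      _ ≤ r ^ n := mul_le_of_le_one_right hp (Real.abs_cos_le_one _)
  · exact .of_forall fun _ _ ↦ summable_geometric_of_lt_one hr0 hr1
  · exact intervalIntegrable_const
  · exact .of_forall fun t _ ↦ hasSum_log_norm_one_sub hr0 hr1 t

lemma ae_sin_ne_zero : ∀ᵐ t : ℝ, Real.sin t ≠ 0 := by
  have hc : ({t : ℝ | Real.sin t = 0}).Countable := by
    refine (Set.countable_range fun n : ℤ ↦ (n : ℝ) * π).mono fun t ht ↦ ?_
    exact Real.sin_eq_zero_iff.1 ht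
  simpa [ae_iff] using hc.measure_zero volume

lemma tendsto_integral_log_norm_one_sub (θ : ℝ) :
    Tendsto (fun r : ℝ ↦
        ∫ t in (0:ℝ)..θ, Real.log ‖1 - (r : ℂ) * Complex.exp (t * Complex.I)‖) (𝓝[<] 1)
      (𝓝 (∫ t in (0:ℝ)..θ, Real.log ‖1 - Complex.exp (t * Complex.I)‖)) := by
  have hev : ∀ᶠ r : ℝ in 𝓝[<] 1, 0 ≤ r ∧ r < 1 := by
    filter_upwards [Ico_mem_nhdsLT (zero_lt_one (α := ℝ))] with r hr using hr
  refine intervalIntegral.tendsto_integral_filter_of_dominated_convergence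
    (fun t ↦ Real.log 2 - Real.log |Real.sin t|) ?_ ?_ ?_ ?_
  · refine .of_forall fun r ↦ Measurable.aestronglyMeasurable ?_
    fun_prop
  · filter_upwards [hev] with r hr
    filter_upwards [ae_sin_ne_zero] with t ht _
    refine abs_log_le_of_mem (abs_pos.2 ht) (Real.abs_sin_le_one t)
      (abs_sin_le_norm_one_sub r t) ?_
    calc ‖1 - (r : ℂ) * Complex.exp (t * Complex.I)‖
        ≤ ‖(1 : ℂ)‖ + ‖(r : ℂ) * Complex.exp (t * Complex.I)‖ := norm_sub_le _ _
      _ ≤ 2 := by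
        rw [norm_mul, Complex.norm_exp_ofReal_mul_I, Complex.norm_real,
          Real.norm_of_nonneg hr.1, norm_one]
        linarith [hr.2]
  · simp only [Real.log_abs]
    exact intervalIntegrable_const.sub intervalIntegrable_log_sin
  · filter_upwards [ae_sin_ne_zero] with t ht _
    have hne : ‖1 - ((1 : ℝ) : ℂ) * Complex.exp (t * Complex.I)‖ ≠ 0 :=
      ((abs_pos.2 ht).trans_le (abs_sin_le_norm_one_sub 1 t)).ne'
    have hc : ContinuousAt
        (fun r : ℝ ↦ Real.log ‖1 - (r : ℂ) * Complex.exp (t * Complex.I)‖) 1 :=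
      ContinuousAt.log (by fun_prop) hne
    simpa using hc.tendsto.mono_left nhdsWithin_le_nhds

lemma summable_one_div_sq : Summable fun n : ℕ ↦ 1 / (n : ℝ) ^ 2 :=
  Real.summable_one_div_nat_pow.2 (by norm_num)

lemma norm_one_sub_exp (t : ℝ) :
    ‖1 - Complex.exp (t * Complex.I)‖ = |2 * Real.sin (t / 2)| := by
  rw [norm_sub_rev, mul_comm, Complex.norm_exp_I_mul_ofReal_sub_one, Real.norm_eq_abs]

/-- The Clausen series: the inner integral, valid for every real `θ`. -/
lemma integral_log_two_mul_sin (θ : ℝ) :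
    ∫ t in (0:ℝ)..θ, Real.log |2 * Real.sin (t / 2)| =
      ∑' n : ℕ, -(Real.sin (n * θ) / n ^ 2) := by
  simp only [← norm_one_sub_exp]
  refine tendsto_nhds_unique (tendsto_integral_log_norm_one_sub θ) ?_
  have hev : ∀ᶠ r : ℝ in 𝓝[<] 1, 0 ≤ r ∧ r < 1 := by
    filter_upwards [Ico_mem_nhdsLT (zero_lt_one (α := ℝ))] with r hr using hr
  have h : Tendsto (fun r : ℝ ↦ ∑' n : ℕ, -(r ^ n * Real.sin (n * θ) / n ^ 2)) (𝓝[<] 1)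
      (𝓝 (∑' n : ℕ, -(Real.sin (n * θ) / n ^ 2))) := by
    refine tendsto_tsum_of_dominated_convergence summable_one_div_sq (fun n ↦ ?_) ?_
    · have hc : Continuous fun r : ℝ ↦ -(r ^ n * Real.sin (n * θ) / n ^ 2) := by fun_prop
      simpa using (hc.tendsto 1).mono_left nhdsWithin_le_nhds
    · filter_upwards [hev] with r hr n
      rw [norm_neg, norm_div, norm_mul, norm_pow, norm_pow, Real.norm_of_nonneg hr.1,
        Real.norm_natCast, Real.norm_eq_abs]
      gcongr
      exact mul_le_one₀ (pow_le_one₀ hr.1 hr.2.le) (abs_nonneg _) (Real.abs_sin_le_one _)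
  refine h.congr' ?_
  filter_upwards [hev] with r hr
  exact (hasSum_integral_log_norm_one_sub hr.1 hr.2 θ).tsum_eq

lemma hasSum_integral_integral (σ : ℝ) :
    HasSum (fun n : ℕ ↦ Real.cos (n * σ) / n ^ 3 - 1 / n ^ 3)
      (∫ θ₂ in (0:ℝ)..σ, ∫ θ₁ in (0:ℝ)..θ₂, Real.log |2 * Real.sin (θ₁ / 2)|) := by
  simp only [integral_log_two_mul_sin]
  have hb : ∀ (n : ℕ) (t : ℝ), ‖-(Real.sin (n * t) / (n : ℝ) ^ 2)‖ ≤ 1 / (n : ℝ) ^ 2 := by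
    intro n t
    rw [norm_neg, norm_div, norm_pow, Real.norm_natCast, Real.norm_eq_abs]
    gcongr
    exact Real.abs_sin_le_one _
  have h := intervalIntegral.hasSum_integral_of_dominated_convergence (μ := volume)
    (a := 0) (b := σ) (F := fun (n : ℕ) t ↦ -(Real.sin (n * t) / (n : ℝ) ^ 2))
    (f := fun t ↦ ∑' n : ℕ, -(Real.sin (n * t) / (n : ℝ) ^ 2))
    (fun n _ ↦ 1 / (n : ℝ) ^ 2) (fun n ↦ by fun_prop)
    (fun n ↦ .of_forall fun t _ ↦ hb n t)
    (.of_forall fun _ _ ↦ summable_one_div_sq) intervalIntegrable_const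
    (.of_forall fun t _ ↦ (summable_one_div_sq.of_norm_bounded (hb · t)).hasSum)
  refine h.congr_fun fun n ↦ ?_
  rcases eq_or_ne n 0 with rfl | hn
  · simp
  have hn' : (n : ℝ) ≠ 0 := by exact_mod_cast hn
  rw [intervalIntegral.integral_neg, intervalIntegral.integral_div,
    intervalIntegral.integral_comp_mul_left (fun x ↦ Real.sin x) hn', integral_sin]
  simp
  field_simp
  ring

lemma hasSum_sin_div_cube {σ : ℝ} (h0 : 0 ≤ σ) (h2 : σ ≤ 2 * π) :
    HasSum (fun n : ℕ ↦ Real.sin (n * σ) / (n : ℝ) ^ 3)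
      (σ ^ 3 / 12 - π * σ ^ 2 / 4 + σ * (π ^ 2 / 6)) := by
  have hpi := Real.pi_pos
  have h := hasSum_one_div_nat_pow_mul_sin one_ne_zero (x := σ / (2 * π))
    ⟨by positivity, (div_le_one (by positivity)).2 h2⟩
  convert h using 1
  · funext n
    rw [show 2 * π * n * (σ / (2 * π)) = n * σ by field_simp]
    ring
  · have hB : (Polynomial.map (algebraMap ℚ ℝ) (Polynomial.bernoulli (2 * 1 + 1))).eval
        (σ / (2 * π)) =
        (σ / (2 * π)) ^ 3 - 3 / 2 * (σ / (2 * π)) ^ 2 + 1 / 2 * (σ / (2 * π)) := by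
      have h3 : bernoulli 3 = 0 := bernoulli_eq_zero_of_odd (by decide) (by norm_num)
      simp [Polynomial.bernoulli_def, Finset.sum_range_succ, h3, bernoulli_one, bernoulli_two,
        Nat.choose]
      ring
    rw [hB]
    simp [Nat.factorial]
    field_simp
    ring

lemma Li_eq_of_hasSum {k : ℕ} (hk : k ≠ 0) {z a : ℂ}
    (h : HasSum (fun n : ℕ ↦ z ^ n / (n : ℂ) ^ k) a) : Li k z = a := by
  rw [← h.tsum_eq]
  refine PNat.coe_injective.tsum_eq (f := fun n : ℕ ↦ z ^ n / (n : ℂ) ^ k) fun n hn ↦ ?_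
  rcases Nat.eq_zero_or_pos n with rfl | hp
  · simp [hk] at hn
  · exact ⟨⟨n, hp⟩, rfl⟩

/-- For `σ ∈ [0,2π]`,
`Ls_{2,1}^{(0,0)}(σ) = (i/4)πσ² - (i/12)σ³ - iσζ(2) - ζ(3) + Li₃(e^{iσ})`. -/
theorem stmt9 (σ : ℝ) (h0 : 0 ≤ σ) (h2 : σ ≤ 2 * π) :
    ((∫ θ₂ in (0:ℝ)..σ, ∫ θ₁ in (0:ℝ)..θ₂, Real.log |2 * Real.sin (θ₁ / 2)| : ℝ) : ℂ) =
      Complex.I / 4 * π * σ ^ 2 - Complex.I / 12 * σ ^ 3 -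
        Complex.I * σ * Li 2 1 - Li 3 1 + Li 3 (Complex.exp (σ * Complex.I)) := by
  have hs3 : Summable fun n : ℕ ↦ 1 / (n : ℝ) ^ 3 :=
    Real.summable_one_div_nat_pow.2 (by norm_num)
  have hLi2 : Li 2 1 = ((π ^ 2 / 6 : ℝ) : ℂ) := by
    refine Li_eq_of_hasSum two_ne_zero ?_
    refine (Complex.hasSum_ofReal.2 hasSum_zeta_two).congr_fun fun n ↦ ?_
    push_cast
    simp
  have hLi3 : Li 3 1 = ((∑' n : ℕ, 1 / (n : ℝ) ^ 3 : ℝ) : ℂ) := by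
    refine Li_eq_of_hasSum three_ne_zero ?_
    refine (Complex.hasSum_ofReal.2 hs3.hasSum).congr_fun fun n ↦ ?_
    push_cast
    simp
  have hcos := (hasSum_integral_integral σ).add hs3.hasSum
  have hsin := hasSum_sin_div_cube h0 h2
  have hLi := Li_eq_of_hasSum (z := Complex.exp (σ * Complex.I)) three_ne_zero
    (((Complex.hasSum_ofReal.2 hcos).add
      ((Complex.hasSum_ofReal.2 hsin).mul_left Complex.I)).congr_fun fun n ↦ by
        rw [← Complex.exp_nat_mul,
          show (n : ℂ) * (σ * Complex.I) = ((n * σ : ℝ) : ℂ) * Complex.I by push_cast; ring,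
          Complex.exp_mul_I]
        push_cast
        ring)
  rw [hLi, hLi2, hLi3]
  push_cast
  ring
end

section
/- For σ ∈ [0, 2π] and integers k ≥ 2, the log-sine integral Ls_k^{(k-2)}(σ) = (i/(2k))σ^k - (iπ/(2(k-1)))σ^{k-1} + i^{k-1}(k-2)! ζ(k) - Σ_{j=0}^{k-2} i^{j+1} ((k-2)!/(k-2-j)!) σ^{k-2-j} Li_{j+2}(e^{iσ}). -/
open Complex Real

lemma li_summand_norm_le (s : ℕ) {z : ℂ} (hz : ‖z‖ ≤ 1) (n : ℕ+) :
    ‖z ^ (n : ℕ) / (n : ℂ) ^ s‖ ≤ 1 / (n : ℝ) ^ s := by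
  rw [norm_div, norm_pow, norm_pow, Complex.norm_natCast]
  gcongr
  exact pow_le_one₀ (norm_nonneg _) hz

lemma summable_one_div_pnat_pow {s : ℕ} (hs : 2 ≤ s) :
    Summable fun n : ℕ+ => 1 / (n : ℝ) ^ s :=
  (Real.summable_one_div_nat_pow.mpr (by omega)).comp_injective PNat.coe_injective

lemma norm_exp_mul_I_le {w : ℂ} (hw : 0 ≤ w.im) : ‖Complex.exp (w * I)‖ ≤ 1 := by
  rw [Complex.norm_exp]; simpa using hw

lemma norm_exp_mul_I_lt {w : ℂ} (hw : 0 < w.im) : ‖Complex.exp (w * I)‖ < 1 := by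
  rw [Complex.norm_exp]; simpa using hw

lemma continuousOn_li_exp {s : ℕ} (hs : 2 ≤ s) :
    ContinuousOn (fun w : ℂ => Li s (Complex.exp (w * I))) {w | 0 ≤ w.im} :=
  continuousOn_tsum (fun n => by fun_prop) (summable_one_div_pnat_pow hs)
    fun n _ hw => li_summand_norm_le s (norm_exp_mul_I_le hw) n

/-- In the open half-plane the series may be differentiated termwise, for every order `s`. -/
lemma hasDerivAt_li_exp (s : ℕ) {w : ℂ} (hw : 0 < w.im) :
    HasDerivAt (fun w : ℂ => Li (s + 1) (Complex.exp (w * I)))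
      (I * Li s (Complex.exp (w * I))) w := by
  -- On `{im > im w / 2}` the differentiated series is dominated by a geometric one.
  set r : ℝ := Real.exp (-(w.im / 2)) with hr
  have hr0 : 0 ≤ r := (Real.exp_pos _).le
  have hr1 : r < 1 := by rw [hr, Real.exp_lt_one_iff]; linarith
  have hu : Summable fun n : ℕ+ => r ^ (n : ℕ) :=
    (summable_geometric_of_lt_one hr0 hr1).comp_injective PNat.coe_injective
  have hnorm : ∀ (s : ℕ) (n : ℕ+) (y : ℂ), w.im / 2 < y.im →
      ‖Complex.exp (y * I) ^ (n : ℕ) / (n : ℂ) ^ s‖ ≤ r ^ (n : ℕ) := by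
    intro s n y hy
    rw [norm_div, norm_pow, norm_pow, Complex.norm_natCast]
    have h1 : (1 : ℝ) ≤ (n : ℝ) ^ s := one_le_pow₀ (by exact_mod_cast n.pos)
    refine (div_le_self (by positivity) h1).trans ?_
    gcongr
    rw [Complex.norm_exp, hr]
    gcongr
    simpa using hy.le
  have hwt : w ∈ {y : ℂ | w.im / 2 < y.im} := by
    change w.im / 2 < w.im; linarith
  have key := hasDerivAt_tsum_of_isPreconnected (𝕜 := ℂ)
    (g := fun (n : ℕ+) (y : ℂ) => Complex.exp (y * I) ^ (n : ℕ) / (n : ℂ) ^ (s + 1))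
    (g' := fun (n : ℕ+) (y : ℂ) => I * (Complex.exp (y * I) ^ (n : ℕ) / (n : ℂ) ^ s))
    (t := {y : ℂ | w.im / 2 < y.im}) hu
    (isOpen_lt continuous_const Complex.continuous_im)
    (convex_halfSpace_im_gt _).isPreconnected
    (fun n y _ => ?_) (fun n y hy => ?_) hwt
    (Summable.of_norm_bounded hu fun n => hnorm (s + 1) n w hwt) hwt
  · rw [tsum_mul_left] at key
    exact key
  · have h1 : HasDerivAt (fun y : ℂ => Complex.exp (y * I)) (Complex.exp (y * I) * (1 * I)) y :=
      ((hasDerivAt_id y).mul_const I).cexp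
    refine ((h1.pow (n : ℕ)).div_const ((n : ℂ) ^ (s + 1))).congr_deriv ?_
    have hn : ((n : ℕ) : ℂ) ≠ 0 := by exact_mod_cast n.ne_zero
    obtain ⟨m, hm⟩ : ∃ m, (n : ℕ) = m + 1 := ⟨n - 1, by have := n.pos; omega⟩
    rw [hm] at hn ⊢
    rw [Nat.add_sub_cancel]
    field_simp
    ring
  · rw [norm_mul, Complex.norm_I, one_mul]
    exact hnorm s n y hy

open Filter Topology in
/-- The derivative formula persists at a boundary point `θ` wherever the derivative from inside the
half-plane has a limit `L`; this is what makes `Li 2` accessible on the unit circle, where the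
differentiated series converges only conditionally. -/
lemma hasDerivAt_li_exp_ofReal {s : ℕ} (hs : 1 ≤ s) {θ : ℝ} {L : ℂ}
    (hL : Tendsto (fun w : ℂ => Li s (Complex.exp (w * I))) (𝓝[{w | 0 < w.im}] (θ : ℂ)) (𝓝 L)) :
    HasDerivAt (fun t : ℝ => Li (s + 1) (Complex.exp (t * I))) (I * L) θ := by
  have hcl : closure {w : ℂ | 0 < w.im} = {w | 0 ≤ w.im} := Complex.closure_setOfPred_lt_im 0
  have hf := hasFDerivWithinAt_closure_of_tendsto_fderiv
    (f := fun w : ℂ => Li (s + 1) (Complex.exp (w * I))) (s := {w : ℂ | 0 < w.im}) (x := (θ : ℂ))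
    (f' := (I * L) • (1 : ℂ →L[ℝ] ℂ))
    (fun w hw => ((hasDerivAt_li_exp s hw).complexToReal_fderiv).differentiableAt
      |>.differentiableWithinAt)
    (convex_halfSpace_im_gt _) (isOpen_lt continuous_const Complex.continuous_im)
    (fun y hy => ((continuousOn_li_exp (by omega : 2 ≤ s + 1)) y (hcl ▸ hy)).mono
      fun w (hw : 0 < w.im) => hw.le)
    (((tendsto_const_nhds.mul hL).smul_const _).congr' ?_)
  · rw [hcl] at hf
    refine (hf.comp_hasDerivAt θ Complex.ofRealCLM.hasDerivAt
      (Eventually.of_forall fun t => by simp)).congr_deriv ?_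
    simp
  · filter_upwards [self_mem_nhdsWithin] with w hw
    exact ((hasDerivAt_li_exp s hw).complexToReal_fderiv).fderiv.symm

lemma hasDerivAt_li_exp_of_two_le {s : ℕ} (hs : 2 ≤ s) (θ : ℝ) :
    HasDerivAt (fun t : ℝ => Li (s + 1) (Complex.exp (t * I)))
      (I * Li s (Complex.exp (θ * I))) θ :=
  hasDerivAt_li_exp_ofReal (by omega) <|
    ((continuousOn_li_exp hs) θ (by simp)).mono fun w (hw : 0 < w.im) => hw.le

lemma li_one_eq {z : ℂ} (hz : ‖z‖ < 1) : Li 1 z = -Complex.log (1 - z) := by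
  rw [← (Complex.hasSum_taylorSeries_neg_log' hz).tsum_eq, Li]
  simpa using tsum_pnat_eq_tsum_succ (f := fun n : ℕ => z ^ n / (n : ℂ))

/-- The polar decomposition `1 - e^{iθ} = 2 sin(θ/2) e^{i(θ-π)/2}`, whose angle lies in
`(-π/2, π/2)` for `0 < θ < 2π`. -/
lemma one_sub_exp_mul_I (θ : ℝ) :
    1 - Complex.exp (θ * I) =
      ((2 * Real.sin (θ / 2) : ℝ) : ℂ) * Complex.exp (((θ - π) / 2 : ℝ) * I) := by
  have h1 : (((θ - π) / 2 : ℝ) : ℂ) * I = (θ / 2 : ℝ) * I + -(π / 2 * I) := by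
    push_cast; ring
  have h2 : (θ : ℂ) * I = (θ / 2 : ℝ) * I + (θ / 2 : ℝ) * I := by push_cast; ring
  rw [h1, h2, Complex.exp_add, Complex.exp_add, Complex.exp_neg, Complex.exp_pi_div_two_mul_I,
    Complex.exp_mul_I, ← Complex.ofReal_cos, ← Complex.ofReal_sin]
  have h3 : (Real.cos (θ / 2) : ℂ) ^ 2 + (Real.sin (θ / 2) : ℂ) ^ 2 = 1 := by
    exact_mod_cast Real.cos_sq_add_sin_sq (θ / 2)
  rw [Complex.inv_I]
  push_cast at h3 ⊢
  linear_combination (-1 : ℂ) * h3 +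
    Complex.sin (θ / 2) ^ 2 * Complex.I_sq

lemma sin_half_pos {θ : ℝ} (h0 : 0 < θ) (h2 : θ < 2 * π) : 0 < Real.sin (θ / 2) :=
  Real.sin_pos_of_pos_of_lt_pi (by linarith) (by linarith)

lemma log_one_sub_exp_mul_I {θ : ℝ} (h0 : 0 < θ) (h2 : θ < 2 * π) :
    Complex.log (1 - Complex.exp (θ * I)) =
      (Real.log |2 * Real.sin (θ / 2)| : ℝ) + ((θ - π) / 2 : ℝ) * I := by
  have hs := sin_half_pos h0 h2
  rw [one_sub_exp_mul_I, Complex.log_ofReal_mul (by positivity) (Complex.exp_ne_zero _),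
    Complex.log_exp, abs_of_pos (by positivity)]
  · simp; linarith
  · simp; linarith

open Filter Topology in
lemma hasDerivAt_li_two_exp {θ : ℝ} (h0 : 0 < θ) (h2 : θ < 2 * π) :
    HasDerivAt (fun t : ℝ => Li 2 (Complex.exp (t * I)))
      (I * -Complex.log (1 - Complex.exp (θ * I))) θ := by
  refine hasDerivAt_li_exp_ofReal (s := 1) le_rfl ?_
  have hslit : 1 - Complex.exp ((θ : ℂ) * I) ∈ slitPlane := by
    have hs := sin_half_pos h0 h2
    rw [one_sub_exp_mul_I]
    refine Or.inl ?_
    rw [Complex.re_ofReal_mul, Complex.exp_ofReal_mul_I_re]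
    have : 0 < Real.cos ((θ - π) / 2) :=
      Real.cos_pos_of_mem_Ioo ⟨by linarith, by linarith⟩
    positivity
  have hc : ContinuousAt (fun w : ℂ => -Complex.log (1 - Complex.exp (w * I))) θ :=
    (ContinuousAt.clog (f := fun w : ℂ => 1 - Complex.exp (w * I)) (by fun_prop) hslit).neg
  refine (hc.tendsto.mono_left nhdsWithin_le_nhds).congr' ?_
  filter_upwards [self_mem_nhdsWithin] with w hw
  exact (li_one_eq (norm_exp_mul_I_lt hw)).symm

/-- The polylogarithmic sum of the formula, with `m = k - 2`. -/
noncomputable def polylogSum (m : ℕ) (t : ℝ) : ℂ :=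
  ∑ j ∈ Finset.range (m + 1), I ^ (j + 1) * ((m.factorial : ℂ) / ((m - j).factorial : ℂ)) *
    (t : ℂ) ^ (m - j) * Li (j + 2) (Complex.exp (t * I))

lemma continuous_polylogSum (m : ℕ) : Continuous (polylogSum m) := by
  refine continuous_finsetSum _ fun j _ => ?_
  have h : Continuous fun t : ℝ => Li (j + 2) (Complex.exp (t * I)) :=
    (continuousOn_li_exp (by omega : 2 ≤ j + 2)).comp_continuous Complex.continuous_ofReal (by simp)
  fun_prop

/-- Only the term `-Li_1(e^{iθ}) = log(1 - e^{iθ})` survives in the derivative: the other summands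
telescope. -/
lemma hasDerivAt_polylogSum (m : ℕ) {θ : ℝ} (h0 : 0 < θ) (h2 : θ < 2 * π) :
    HasDerivAt (polylogSum m) ((θ : ℂ) ^ m * Complex.log (1 - Complex.exp (θ * I))) θ := by
  -- `D j` is the derivative of `t ↦ Li (j + 2) (exp (i t))`.
  set D : ℕ → ℂ := fun j => if j = 0 then I * -Complex.log (1 - Complex.exp (θ * I))
    else I * Li (j + 1) (Complex.exp (θ * I)) with hD
  have hLi : ∀ j, HasDerivAt (fun t : ℝ => Li (j + 2) (Complex.exp (t * I))) (D j) θ := by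
    intro j
    rcases j with _ | j
    · simpa [hD] using hasDerivAt_li_two_exp h0 h2
    · simpa [hD] using hasDerivAt_li_exp_of_two_le (by omega : 2 ≤ j + 2) θ
  have hpow : ∀ n : ℕ, HasDerivAt (fun t : ℝ => (t : ℂ) ^ n) (n * (θ : ℂ) ^ (n - 1)) θ := by
    intro n
    simpa using (hasDerivAt_pow n (θ : ℂ)).comp_ofReal
  have hterm : ∀ j, HasDerivAt (fun t : ℝ => I ^ (j + 1) *
      ((m.factorial : ℂ) / ((m - j).factorial : ℂ)) * (t : ℂ) ^ (m - j) *
        Li (j + 2) (Complex.exp (t * I))) _ θ := fun j =>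
    (((hpow (m - j)).const_mul
      (I ^ (j + 1) * ((m.factorial : ℂ) / ((m - j).factorial : ℂ)))).mul (hLi j))
  have hsum := HasDerivAt.fun_sum (u := Finset.range (m + 1)) fun j _ => hterm j
  have htel : ∀ n ≤ m, ∑ j ∈ Finset.range (n + 1),
      (I ^ (j + 1) * ((m.factorial : ℂ) / ((m - j).factorial : ℂ)) *
          (((m - j : ℕ) : ℂ) * (θ : ℂ) ^ (m - j - 1)) * Li (j + 2) (Complex.exp (θ * I)) +
        I ^ (j + 1) * ((m.factorial : ℂ) / ((m - j).factorial : ℂ)) * (θ : ℂ) ^ (m - j) * D j) =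
      (θ : ℂ) ^ m * Complex.log (1 - Complex.exp (θ * I)) +
        I ^ (n + 1) * ((m.factorial : ℂ) / ((m - n).factorial : ℂ)) *
          (((m - n : ℕ) : ℂ) * (θ : ℂ) ^ (m - n - 1)) * Li (n + 2) (Complex.exp (θ * I)) := by
    intro n
    induction n with
    | zero =>
      intro _
      have hm : (m.factorial : ℂ) ≠ 0 := by exact_mod_cast m.factorial_ne_zero
      simp only [zero_add, Finset.range_one, Finset.sum_singleton, hD, if_true, Nat.sub_zero,
        div_self hm, pow_one]
      linear_combination
        -(θ : ℂ) ^ m * Complex.log (1 - Complex.exp (θ * I)) * Complex.I_sq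
    | succ n ih =>
      intro hn
      rw [Finset.sum_range_succ, ih (by omega)]
      obtain ⟨p, hp⟩ : ∃ p, m = n + 1 + p := ⟨m - (n + 1), by omega⟩
      have e1 : m - n = p + 1 := by omega
      have e2 : m - (n + 1) = p := by omega
      have hp1 : (p.factorial : ℂ) ≠ 0 := by exact_mod_cast p.factorial_ne_zero
      have hp2 : (p : ℂ) + 1 ≠ 0 := by exact_mod_cast p.succ_ne_zero
      simp only [e1, e2, hD, Nat.succ_ne_zero, if_false, Nat.factorial_succ, Nat.add_sub_cancel]
      push_cast
      field_simp
      have hI : I ^ (n + 1 + 1 + 1) = - I ^ (n + 1) := by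
        rw [pow_succ, pow_succ (n := n + 1), mul_assoc, Complex.I_mul_I]; ring
      ring_nf at hI ⊢
      linear_combination
        (θ : ℂ) ^ p * (m.factorial : ℂ) * Li (2 + n) (Complex.exp (I * θ)) * hI
  rw [htel m le_rfl] at hsum
  refine hsum.congr_deriv ?_
  simp

/-- For `σ ∈ [0,2π]` and `k ≥ 2`,
`Ls_k^{(k-2)}(σ) = (i/(2k))σ^k - (iπ/(2(k-1)))σ^{k-1} + i^{k-1}(k-2)!ζ(k)
 - Σ_{j=0}^{k-2} i^{j+1} ((k-2)!/(k-2-j)!) σ^{k-2-j} Li_{j+2}(e^{iσ})`. -/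
theorem stmt10 (σ : ℝ) (h0 : 0 ≤ σ) (h2 : σ ≤ 2 * π) (k : ℕ) (hk : 2 ≤ k) :
    ((-(∫ θ in (0:ℝ)..σ, θ ^ (k - 2) * Real.log |2 * Real.sin (θ / 2)|) : ℝ) : ℂ) =
      Complex.I / (2 * k) * σ ^ k - Complex.I * π / (2 * (k - 1 : ℕ)) * σ ^ (k - 1) +
        Complex.I ^ (k - 1) * (Nat.factorial (k - 2)) * Li k 1 -
        ∑ j ∈ Finset.range (k - 1),
          Complex.I ^ (j + 1) *
            ((Nat.factorial (k - 2) : ℂ) / (Nat.factorial (k - 2 - j) : ℂ)) *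
            σ ^ (k - 2 - j) * Li (j + 2) (Complex.exp (σ * Complex.I)) := by
  obtain ⟨m, rfl⟩ : ∃ m, k = m + 2 := ⟨k - 2, by omega⟩
  have e1 : m + 2 - 1 = m + 1 := by omega
  simp only [Nat.add_sub_cancel, e1]
  change _ = _ - polylogSum m σ
  have hm1 : (m : ℂ) + 1 ≠ 0 := by exact_mod_cast m.succ_ne_zero
  have hm2 : (m : ℂ) + 2 ≠ 0 := by exact_mod_cast (m + 1).succ_ne_zero
  -- `F` is an antiderivative of the integrand, and `F 0` is the `ζ(k)` term of the formula.
  set F : ℝ → ℂ := fun t => polylogSum m t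
    - (I / (2 * (m + 2)) * (t : ℂ) ^ (m + 2) - I * π / (2 * (m + 1)) * (t : ℂ) ^ (m + 1)) with hF
  have hint : IntervalIntegrable (fun θ : ℝ => θ ^ m * Real.log |2 * Real.sin (θ / 2)|)
      MeasureTheory.volume 0 σ := by
    have hmer : MeromorphicOn (fun θ : ℝ => 2 * Real.sin (θ / 2)) (Set.uIcc 0 σ) := by
      have : AnalyticOnNhd ℝ (fun θ : ℝ => 2 * Real.sin (θ / 2)) (Set.uIcc 0 σ) :=
        fun x _ => by fun_prop
      exact this.meromorphicOn
    exact (hmer.intervalIntegrable_log_norm).continuousOn_mul (by fun_prop)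
  have hFTC := intervalIntegral.integral_eq_sub_of_hasDerivAt_of_le (f := F)
    (f' := fun θ : ℝ => ((θ ^ m * Real.log |2 * Real.sin (θ / 2)| : ℝ) : ℂ)) h0
    (by have := continuous_polylogSum m; exact Continuous.continuousOn (by fun_prop))
    (fun θ hθ => ?_) ⟨hint.1.ofReal, hint.2.ofReal⟩
  · have hF0 : F 0 = I ^ (m + 1) * m.factorial * Li (m + 2) 1 := by
      have hz : polylogSum m 0 = I ^ (m + 1) * m.factorial * Li (m + 2) 1 := by
        rw [polylogSum, Finset.sum_range_succ, Finset.sum_eq_zero]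
        · simp
        · intro j hj
          have : m - j ≠ 0 := by have := Finset.mem_range.mp hj; omega
          simp [this]
      simp [hF, hz]
    rw [intervalIntegral.integral_ofReal, hF0] at hFTC
    rw [Complex.ofReal_neg, hFTC, hF]
    push_cast
    ring
  · have hpow : ∀ n : ℕ, HasDerivAt (fun t : ℝ => (t : ℂ) ^ n) (n * (θ : ℂ) ^ (n - 1)) θ := by
      intro n
      simpa using (hasDerivAt_pow n (θ : ℂ)).comp_ofReal
    have h := (hasDerivAt_polylogSum m hθ.1 (hθ.2.trans_le h2)).sub
      (((hpow (m + 2)).const_mul (I / (2 * (m + 2)))).sub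
        ((hpow (m + 1)).const_mul (I * π / (2 * (m + 1)))))
    refine h.congr_deriv ?_
    rw [log_one_sub_exp_mul_I hθ.1 (hθ.2.trans_le h2), e1, Nat.add_sub_cancel]
    push_cast
    field_simp
    ring
end

section
/- For k ∈ ℤ_{≥0}, (-1)^k ∫_0^{π/3} (θ - π/3)^{2k+1} log|2 sin(θ/2)| dθ = -(1/2)(2k+1)!(1 - 2^{-2k-2})(1 - 3^{-2k-2}) ζ(2k+3) + (2k+1)! Σ_{m=0}^{k} (-1)^m (π/3)^{2m} ζ(2k+3-2m)/(2m)!. -/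
/-!
The Fourier series `log |2 sin (θ/2)| = -∑ cos (n θ) / n` is integrated term by term against
`(θ - π/3)^(2k+1)`. Since the series converges only conditionally, this is done by Abel summation:
for `r < 1` the function `log |1 - r e^{iθ}|` has the uniformly convergent expansion
`-∑ r^n cos (n θ) / n`. As `r → 1⁻`, the integrals converge by dominated convergence, because
`sin θ ≤ |1 - r e^{iθ}| ≤ 2`, and the series converge by Abel's limit theorem
(`integral_mul_log_two_sin`).

The moments `∫ (θ - a)^(2k+1) cos (n θ)` follow from a two-step integration by parts in `k`
(`moment_succ`, `moment_closed`). Summed over `n`, they give the values `ζ(2k+3-2m)` together with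
`∑ cos (n π/3) / n^s`. The latter reduces to `ζ(s)` through
`2 cos (n π/3) = (1 - 2·[2 ∣ n]) (1 - 3·[3 ∣ n])` (`hasSum_cos_div`).
-/

open Real

/-- The real zeta value `ζ(s) = Σ_{n≥1} 1/n^s` for a natural number exponent. -/
noncomputable def zetaR (s : ℕ) : ℝ := ∑' n : ℕ+, (1 : ℝ) / (n : ℝ) ^ s

open Filter Topology MeasureTheory

/-! ### Dirichlet series `∑ cos (n π/3) / n^s` -/

lemma hasSum_zetaR {s : ℕ} (hs : 2 ≤ s) : HasSum (fun n : ℕ => 1 / (n : ℝ) ^ s) (zetaR s) := by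
  have h1 : Summable (fun n : ℕ => 1 / (n : ℝ) ^ s) :=
    Real.summable_one_div_nat_pow.2 (by omega)
  have h2 : zetaR s = ∑' n : ℕ, 1 / (n : ℝ) ^ s := by
    rw [h1.tsum_eq_zero_add, zetaR, tsum_pnat_eq_tsum_succ (f := fun n : ℕ => 1 / (n : ℝ) ^ s)]
    simp [show s ≠ 0 by omega]
  rw [h2]
  exact h1.hasSum

lemma hasSum_zetaR_dvd {s : ℕ} (hs : 2 ≤ s) (d : ℕ) (hd : 0 < d) :
    HasSum (fun n : ℕ => if d ∣ n then 1 / (n : ℝ) ^ s else 0) (1 / (d : ℝ) ^ s * zetaR s) := by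
  have hinj : Function.Injective (fun n : ℕ => d * n) := fun a b h =>
    Nat.eq_of_mul_eq_mul_left hd h
  rw [← hinj.hasSum_iff]
  · refine ((hasSum_zetaR hs).mul_left (1 / (d : ℝ) ^ s)).congr_fun ?_
    intro n
    simp [mul_pow, mul_comm]
  · intro x hx
    rw [if_neg]
    rintro ⟨c, rfl⟩
    exact hx ⟨c, rfl⟩

/-- The indicator form of `2 cos (n π/3) = (1 - 2·[2 ∣ n]) (1 - 3·[3 ∣ n])`, expanded so that each
term sums to a multiple of `ζ(s)`. -/
lemma cos_nat_mul_pi_div_three (n : ℕ) :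
    Real.cos (n * (π / 3)) = 1 / 2 * (1 - 2 * (if 2 ∣ n then 1 else 0)
      - 3 * (if 3 ∣ n then 1 else 0) + 6 * (if 6 ∣ n then 1 else 0)) := by
  obtain ⟨q, t, ht, rfl⟩ : ∃ q t, t < 6 ∧ n = t + 6 * q :=
    ⟨n / 6, n % 6, Nat.mod_lt _ (by norm_num), by omega⟩
  have h1 : ((t + 6 * q : ℕ) : ℝ) * (π / 3) = t * (π / 3) + q * (2 * π) := by
    push_cast; ring
  rw [h1, Real.cos_add_nat_mul_two_pi]
  have e2 : Real.cos (2 * (π / 3)) = -(1 / 2) := by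
    rw [show 2 * (π / 3) = π - π / 3 by ring, Real.cos_pi_sub, Real.cos_pi_div_three]
  have e3 : Real.cos (3 * (π / 3)) = -1 := by
    rw [show 3 * (π / 3) = π by ring, Real.cos_pi]
  have e4 : Real.cos (4 * (π / 3)) = -(1 / 2) := by
    rw [show 4 * (π / 3) = π / 3 + π by ring, Real.cos_add_pi, Real.cos_pi_div_three]
  have e5 : Real.cos (5 * (π / 3)) = 1 / 2 := by
    rw [show 5 * (π / 3) = 2 * π - π / 3 by ring, Real.cos_two_pi_sub, Real.cos_pi_div_three]
  have d2 : (2 ∣ t + 6 * q) ↔ 2 ∣ t := by omega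
  have d3 : (3 ∣ t + 6 * q) ↔ 3 ∣ t := by omega
  have d6 : (6 ∣ t + 6 * q) ↔ 6 ∣ t := by omega
  simp only [d2, d3, d6]
  interval_cases t
  · norm_num
  · norm_num
  · norm_num [e2]
  · norm_num [e3]
  · norm_num [e4]
  · norm_num [e5]

lemma hasSum_cos_div {s : ℕ} (hs : 2 ≤ s) :
    HasSum (fun n : ℕ => Real.cos (n * (π / 3)) * (1 / (n : ℝ) ^ s))
      (1 / 2 * (1 - 2 / 2 ^ s) * (1 - 3 / 3 ^ s) * zetaR s) := by
  have h := ((((hasSum_zetaR hs).sub ((hasSum_zetaR_dvd hs 2 (by norm_num)).mul_left 2)).sub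
    ((hasSum_zetaR_dvd hs 3 (by norm_num)).mul_left 3)).add
    ((hasSum_zetaR_dvd hs 6 (by norm_num)).mul_left 6)).mul_left (1 / 2)
  have h6 : ((6 : ℕ) : ℝ) ^ s = 2 ^ s * 3 ^ s := by rw [← mul_pow]; norm_num
  have hval : 1 / 2 * (1 - 2 / 2 ^ s) * (1 - 3 / 3 ^ s) * zetaR s =
      1 / 2 * (zetaR s - 2 * (1 / ((2 : ℕ) : ℝ) ^ s * zetaR s)
        - 3 * (1 / ((3 : ℕ) : ℝ) ^ s * zetaR s) + 6 * (1 / ((6 : ℕ) : ℝ) ^ s * zetaR s)) := by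
    rw [h6]
    push_cast
    field_simp
    ring
  rw [hval]
  refine h.congr_fun fun n => ?_
  rw [cos_nat_mul_pi_div_three]
  split_ifs <;> ring

/-! ### Moments of the cosine -/

/-- Two integrations by parts; the boundary terms at `a` vanish, as does the sine term at `0`. -/
lemma moment_succ (a : ℝ) (k : ℕ) {x : ℝ} (hx : x ≠ 0) :
    ∫ θ in (0:ℝ)..a, (θ - a) ^ (2 * (k + 1) + 1) * Real.cos (x * θ) =
      -((2 * k + 3) * a ^ (2 * k + 2) / x ^ 2) - (2 * k + 3) * (2 * k + 2) / x ^ 2 *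
        ∫ θ in (0:ℝ)..a, (θ - a) ^ (2 * k + 1) * Real.cos (x * θ) := by
  have hd : ∀ θ ∈ Set.uIcc 0 a, HasDerivAt
      (fun θ => (θ - a) ^ (2 * k + 3) * (Real.sin (x * θ) / x)
        + (2 * k + 3) * (θ - a) ^ (2 * k + 2) * (Real.cos (x * θ) / x ^ 2))
      ((θ - a) ^ (2 * (k + 1) + 1) * Real.cos (x * θ) +
        (2 * k + 3) * (2 * k + 2) / x ^ 2 * ((θ - a) ^ (2 * k + 1) * Real.cos (x * θ))) θ := by
    intro θ _
    have hl : HasDerivAt (fun θ : ℝ => x * θ) x θ := by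
      simpa using (hasDerivAt_id θ).const_mul x
    have hp : ∀ n : ℕ, HasDerivAt (fun θ : ℝ => (θ - a) ^ (n + 1)) ((n + 1) * (θ - a) ^ n) θ := by
      intro n
      exact (((hasDerivAt_id θ).sub_const a).fun_pow (n + 1)).congr_deriv (by simp)
    refine (((hp (2 * k + 2)).fun_mul (hl.sin.div_const x)).fun_add
      (((hp (2 * k + 1)).const_mul (2 * k + 3 : ℝ)).fun_mul
        (hl.cos.div_const (x ^ 2)))).congr_deriv ?_
    push_cast
    field_simp
    ring
  have hi := intervalIntegral.integral_eq_sub_of_hasDerivAt hd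
    (Continuous.intervalIntegrable (by fun_prop) _ _)
  rw [intervalIntegral.integral_add (Continuous.intervalIntegrable (by fun_prop) _ _)
    (Continuous.intervalIntegrable (by fun_prop) _ _),
    intervalIntegral.integral_const_mul] at hi
  have hev : (0 - a) ^ (2 * k + 2) = a ^ (2 * k + 2) := by
    rw [zero_sub]; exact Even.neg_pow ⟨k + 1, by ring⟩ a
  rw [eq_sub_iff_add_eq, hi, hev]
  simp
  ring

lemma moment_zero (a : ℝ) {x : ℝ} (hx : x ≠ 0) :
    ∫ θ in (0:ℝ)..a, (θ - a) * Real.cos (x * θ) = (Real.cos (x * a) - 1) / x ^ 2 := by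
  have hd : ∀ θ ∈ Set.uIcc 0 a, HasDerivAt
      (fun θ => (θ - a) * (Real.sin (x * θ) / x) + Real.cos (x * θ) / x ^ 2)
      ((θ - a) * Real.cos (x * θ)) θ := by
    intro θ _
    have hl : HasDerivAt (fun θ : ℝ => x * θ) x θ := by
      simpa using (hasDerivAt_id θ).const_mul x
    refine ((((hasDerivAt_id θ).sub_const a).fun_mul (hl.sin.div_const x)).fun_add
      (hl.cos.div_const (x ^ 2))).congr_deriv ?_
    simp only [id]
    field_simp
    ring
  rw [intervalIntegral.integral_eq_sub_of_hasDerivAt hd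
    (Continuous.intervalIntegrable (by fun_prop) _ _)]
  simp
  ring

/-- Closed form of the odd moments. For `a = π/3`, dividing by `x = n` and summing over `n` turns
each term of the right-hand side into a Dirichlet series of exponent at least `3`. -/
lemma moment_closed (a : ℝ) {x : ℝ} (hx : x ≠ 0) (k : ℕ) :
    (-1) ^ k * ∫ θ in (0:ℝ)..a, (θ - a) ^ (2 * k + 1) * Real.cos (x * θ) =
      (Nat.factorial (2 * k + 1)) * (Real.cos (x * a) / x ^ (2 * k + 2) -
        ∑ m ∈ Finset.range (k + 1),
          (-1) ^ m * a ^ (2 * m) / (Nat.factorial (2 * m)) / x ^ (2 * k + 2 - 2 * m)) := by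
  induction k with
  | zero => simp [moment_zero a hx]; ring
  | succ k ih =>
    rw [moment_succ a k hx, Finset.sum_range_succ]
    have h1 : ∑ m ∈ Finset.range (k + 1), (-1) ^ m * a ^ (2 * m) / (Nat.factorial (2 * m))
          / x ^ (2 * (k + 1) + 2 - 2 * m) =
        (∑ m ∈ Finset.range (k + 1), (-1) ^ m * a ^ (2 * m) / (Nat.factorial (2 * m))
          / x ^ (2 * k + 2 - 2 * m)) / x ^ 2 := by
      rw [Finset.sum_div]
      refine Finset.sum_congr rfl fun m hm => ?_
      have := Finset.mem_range.1 hm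
      rw [show 2 * (k + 1) + 2 - 2 * m = (2 * k + 2 - 2 * m) + 2 by omega, pow_add, div_div _ _ (x ^ 2)]
    have h2 : (-1 : ℝ) ^ (k + 1) * (-((2 * k + 3) * a ^ (2 * k + 2) / x ^ 2) -
        (2 * k + 3) * (2 * k + 2) / x ^ 2 *
          ∫ θ in (0:ℝ)..a, (θ - a) ^ (2 * k + 1) * Real.cos (x * θ)) =
        (-1) ^ k * ((2 * k + 3) * a ^ (2 * k + 2) / x ^ 2) + (2 * k + 3) * (2 * k + 2) / x ^ 2 *
        ((-1) ^ k * ∫ θ in (0:ℝ)..a, (θ - a) ^ (2 * k + 1) * Real.cos (x * θ)) := by ring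
    rw [h1, h2, ih, show 2 * (k + 1) + 2 - 2 * (k + 1) = 2 by omega]
    have f1 : ((Nat.factorial (2 * (k + 1) + 1) : ℕ) : ℝ) =
        (2 * k + 3) * (2 * k + 2) * (Nat.factorial (2 * k + 1)) := by
      rw [show 2 * (k + 1) + 1 = (2 * k + 1) + 1 + 1 by ring, Nat.factorial_succ,
        Nat.factorial_succ]
      push_cast; ring
    have f2 : ((Nat.factorial (2 * (k + 1)) : ℕ) : ℝ) =
        (2 * k + 2) * (Nat.factorial (2 * k + 1)) := by
      rw [show 2 * (k + 1) = (2 * k + 1) + 1 by ring, Nat.factorial_succ]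
      push_cast; ring
    rw [f1, f2]
    generalize ∑ m ∈ Finset.range (k + 1), (-1) ^ m * a ^ (2 * m) / (Nat.factorial (2 * m))
          / x ^ (2 * k + 2 - 2 * m) = T
    have h0 : ((Nat.factorial (2 * k + 1) : ℕ) : ℝ) ≠ 0 := by positivity
    have h3 : (2 * k + 2 : ℝ) ≠ 0 := by positivity
    field_simp
    ring

/-- The series `∑ (∫ (θ - π/3)^(2k+1) cos (n θ)) / n`, up to sign. The term `n = 0` is zero, since
division by `0` gives `0`. -/
lemma hasSum_moment (k : ℕ) :
    HasSum (fun n : ℕ => (-1) ^ k *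
        ((∫ θ in (0:ℝ)..(π / 3), (θ - π / 3) ^ (2 * k + 1) * Real.cos (n * θ)) / n))
      ((Nat.factorial (2 * k + 1)) *
        (1 / 2 * (1 - 2 / 2 ^ (2 * k + 3)) * (1 - 3 / 3 ^ (2 * k + 3)) * zetaR (2 * k + 3) -
        ∑ m ∈ Finset.range (k + 1), (-1) ^ m * (π / 3) ^ (2 * m) / (Nat.factorial (2 * m)) *
          zetaR (2 * k + 3 - 2 * m))) := by
  have h := ((hasSum_cos_div (s := 2 * k + 3) (by omega)).sub
    (hasSum_sum (s := Finset.range (k + 1)) (fun m hm =>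
      (hasSum_zetaR (s := 2 * k + 3 - 2 * m) (by
        have := Finset.mem_range.1 hm; omega)).mul_left
        ((-1) ^ m * (π / 3) ^ (2 * m) / (Nat.factorial (2 * m)))))).mul_left
        (Nat.factorial (2 * k + 1) : ℝ)
  refine h.congr_fun fun n => ?_
  rcases Nat.eq_zero_or_pos n with rfl | hn
  · rw [Finset.sum_eq_zero]
    · simp
    · intro m hm
      have := Finset.mem_range.1 hm
      simp [show 2 * k + 3 - 2 * m ≠ 0 by omega]
  · have hx : (n : ℝ) ≠ 0 := by positivity
    rw [← mul_div_assoc, moment_closed _ hx, mul_div_assoc, sub_div, Finset.sum_div]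
    congr 2
    · field_simp
      ring
    · refine Finset.sum_congr rfl fun m hm => ?_
      have := Finset.mem_range.1 hm
      rw [show 2 * k + 3 - 2 * m = (2 * k + 2 - 2 * m) + 1 by omega, pow_succ]
      field_simp

/-! ### Abel summation of the Fourier series of `log |2 sin (θ/2)|` -/

lemma hasSum_log_norm (r θ : ℝ) (h0 : 0 ≤ r) (h1 : r < 1) :
    HasSum (fun n : ℕ => Real.cos (n * θ) / n * r ^ n)
      (-Real.log ‖1 - r * Complex.exp (Complex.I * θ)‖) := by
  have hz : ‖(r : ℂ) * Complex.exp (Complex.I * θ)‖ < 1 := by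
    rw [norm_mul, mul_comm Complex.I, Complex.norm_exp_ofReal_mul_I]
    simpa [abs_of_nonneg h0] using h1
  have h := Complex.hasSum_re (Complex.hasSum_taylorSeries_neg_log hz)
  rw [Complex.neg_re, Complex.log_re] at h
  refine h.congr_fun fun n => ?_
  rw [mul_pow, ← Complex.exp_nat_mul, ← Complex.ofReal_pow,
    show (n : ℂ) * (Complex.I * θ) = ((n * θ : ℝ) : ℂ) * Complex.I by push_cast; ring,
    mul_div_assoc, Complex.re_ofReal_mul, ← Complex.ofReal_natCast, Complex.div_ofReal_re,
    Complex.exp_ofReal_mul_I_re]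
  ring

/-- `|sin θ|` is the distance from `1` to the line through `0` and `e^{iθ}`. -/
lemma abs_sin_le_norm (r θ : ℝ) : |Real.sin θ| ≤ ‖1 - r * Complex.exp (Complex.I * θ)‖ := by
  have hsq : ‖1 - r * Complex.exp (Complex.I * θ)‖ ^ 2 = 1 - 2 * r * Real.cos θ + r ^ 2 := by
    rw [← Complex.normSq_eq_norm_sq, Complex.normSq_apply, mul_comm Complex.I]
    simp only [Complex.sub_re, Complex.sub_im, Complex.one_re, Complex.one_im,
      Complex.re_ofReal_mul, Complex.im_ofReal_mul, Complex.exp_ofReal_mul_I_re,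
      Complex.exp_ofReal_mul_I_im]
    linear_combination r ^ 2 * Real.sin_sq_add_cos_sq θ
  refine abs_le_of_sq_le_sq' ?_ (norm_nonneg _) |> abs_le.2
  rw [hsq]
  nlinarith [Real.sin_sq_add_cos_sq θ, sq_nonneg (r - Real.cos θ)]

lemma norm_one_sub_le (r θ : ℝ) (h0 : 0 ≤ r) (h1 : r < 1) :
    ‖1 - r * Complex.exp (Complex.I * θ)‖ ≤ 2 := by
  refine (norm_sub_le _ _).trans ?_
  rw [norm_mul, mul_comm Complex.I, Complex.norm_exp_ofReal_mul_I]
  simp [abs_of_nonneg h0]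
  linarith

lemma sin_pos_of_mem {θ : ℝ} (h : θ ∈ Set.uIoc 0 (π / 3)) : 0 < Real.sin θ := by
  rw [Set.uIoc_of_le (by positivity)] at h
  exact Real.sin_pos_of_pos_of_lt_pi h.1 (by linarith [h.2, Real.pi_pos])

lemma continuousOn_log_norm (r : ℝ) :
    ContinuousOn (fun θ : ℝ => Real.log ‖1 - r * Complex.exp (Complex.I * θ)‖)
      (Set.uIoc 0 (π / 3)) := by
  refine ContinuousOn.log (by fun_prop) fun θ hθ => ?_
  have := abs_sin_le_norm r θ
  have h2 := abs_pos.2 (sin_pos_of_mem hθ).ne'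
  linarith

lemma integral_mul_log_norm (f : ℝ → ℝ) (hf : Continuous f) (r : ℝ) (h0 : 0 ≤ r) (h1 : r < 1) :
    HasSum (fun n : ℕ => (∫ θ in (0:ℝ)..(π / 3), f θ * Real.cos (n * θ)) / n * r ^ n)
      (-∫ θ in (0:ℝ)..(π / 3), f θ * Real.log ‖1 - r * Complex.exp (Complex.I * θ)‖) := by
  have h := intervalIntegral.hasSum_integral_of_dominated_convergence (a := 0) (b := π / 3)
    (μ := volume) (F := fun (n : ℕ) θ => f θ * (Real.cos (n * θ) / n * r ^ n))
    (f := fun θ => f θ * -Real.log ‖1 - r * Complex.exp (Complex.I * θ)‖)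
    (fun n θ => |f θ| * r ^ n) (fun n => by
      refine Continuous.aestronglyMeasurable ?_
      fun_prop)
    (fun n => Eventually.of_forall fun θ _ => by
      rw [norm_mul, Real.norm_eq_abs, norm_mul, norm_pow, Real.norm_of_nonneg h0]
      refine mul_le_mul_of_nonneg_left ?_ (abs_nonneg _)
      refine mul_le_of_le_one_left (by positivity) ?_
      rw [norm_div, Real.norm_natCast, Real.norm_eq_abs]
      rcases Nat.eq_zero_or_pos n with rfl | hn
      · simp
      · have : (1 : ℝ) ≤ n := by exact_mod_cast hn
        rw [div_le_one (by positivity)]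
        exact (Real.abs_cos_le_one _).trans this)
    (Eventually.of_forall fun θ _ => (summable_geometric_of_lt_one h0 h1).mul_left _)
    (by
      simp_rw [tsum_mul_left]
      exact Continuous.intervalIntegrable (by fun_prop) _ _)
    (Eventually.of_forall fun θ _ => (hasSum_log_norm r θ h0 h1).mul_left _)
  simp only [mul_neg, intervalIntegral.integral_neg] at h
  refine h.congr_fun fun n => ?_
  rw [div_mul_eq_mul_div, mul_div_assoc, ← intervalIntegral.integral_mul_const]
  congr 1
  funext θ
  ring

/-- Abel summation: `log |2 sin (θ/2)|` may be integrated termwise as a Fourier series, as soon as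
the resulting series converges. -/
lemma integral_mul_log_two_sin (f : ℝ → ℝ) (hf : Continuous f) {S : ℝ}
    (hS : HasSum (fun n : ℕ => (∫ θ in (0:ℝ)..(π / 3), f θ * Real.cos (n * θ)) / n) S) :
    ∫ θ in (0:ℝ)..(π / 3), f θ * Real.log |2 * Real.sin (θ / 2)| = -S := by
  have hr : ∀ᶠ r : ℝ in 𝓝[<] 1, 0 ≤ r ∧ r < 1 := by
    filter_upwards [Ioo_mem_nhdsLT (show (0:ℝ) < 1 by norm_num)] with r hr
    exact ⟨hr.1.le, hr.2⟩
  have habel := Real.tendsto_tsum_powerSeries_nhdsWithin_lt hS.tendsto_sum_nat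
  have hlim : Tendsto (fun r : ℝ =>
      ∫ θ in (0:ℝ)..(π / 3), f θ * Real.log ‖1 - r * Complex.exp (Complex.I * θ)‖) (𝓝[<] 1)
      (𝓝 (∫ θ in (0:ℝ)..(π / 3), f θ * Real.log |2 * Real.sin (θ / 2)|)) := by
    refine intervalIntegral.tendsto_integral_filter_of_dominated_convergence
      (fun θ => |f θ| * (Real.log 2 + |(Real.log ∘ Real.sin) θ|)) ?_ ?_ ?_ ?_
    · refine Eventually.of_forall fun r => ?_
      exact (hf.continuousOn.mul (continuousOn_log_norm r)).aestronglyMeasurable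
        measurableSet_uIoc
    · filter_upwards [hr] with r hr
      refine Eventually.of_forall fun θ hθ => ?_
      rw [norm_mul, Real.norm_eq_abs, Real.norm_eq_abs]
      refine mul_le_mul_of_nonneg_left ?_ (abs_nonneg _)
      have hs := sin_pos_of_mem hθ
      have hl := abs_sin_le_norm r θ
      rw [abs_of_pos hs] at hl
      have hu := Real.log_le_log (hs.trans_le hl) (norm_one_sub_le r θ hr.1 hr.2)
      have hl' := Real.log_le_log hs hl
      have h2 : 0 ≤ Real.log 2 := Real.log_nonneg (by norm_num)
      rw [abs_le]
      simp only [Function.comp]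
      constructor
      · linarith [neg_abs_le (Real.log (Real.sin θ))]
      · linarith [abs_nonneg (Real.log (Real.sin θ))]
    · exact ((intervalIntegrable_const (c := Real.log 2)).add
        intervalIntegrable_log_sin.abs).continuousOn_mul hf.abs.continuousOn
    · refine Eventually.of_forall fun θ hθ => ?_
      refine Tendsto.const_mul _ ?_
      have he : |2 * Real.sin (θ / 2)| = ‖1 - ((1 : ℝ) : ℂ) * Complex.exp (Complex.I * θ)‖ := by
        rw [Complex.ofReal_one, one_mul, norm_sub_rev, Complex.norm_exp_I_mul_ofReal_sub_one,
          Real.norm_eq_abs]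
      have hne : ‖1 - ((1 : ℝ) : ℂ) * Complex.exp (Complex.I * θ)‖ ≠ 0 := by
        have := abs_sin_le_norm 1 θ
        have h2 := abs_pos.2 (sin_pos_of_mem hθ).ne'
        linarith
      rw [he]
      have hc : ContinuousAt
          (fun r : ℝ => Real.log ‖1 - (r : ℂ) * Complex.exp (Complex.I * θ)‖) 1 :=
        ContinuousAt.log (by fun_prop) hne
      exact hc.tendsto.mono_left nhdsWithin_le_nhds
  have heq : (fun r : ℝ =>
      ∑' n : ℕ, (∫ θ in (0:ℝ)..(π / 3), f θ * Real.cos (n * θ)) / n * r ^ n) =ᶠ[𝓝[<] 1]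
      fun r : ℝ =>
        -∫ θ in (0:ℝ)..(π / 3), f θ * Real.log ‖1 - r * Complex.exp (Complex.I * θ)‖ := by
    filter_upwards [hr] with r hr
    exact (integral_mul_log_norm f hf r hr.1 hr.2).tsum_eq
  have := tendsto_nhds_unique (habel.congr' heq) hlim.neg
  rw [this, neg_neg]

/-- The Choi–Cho–Srivastava / Lewin evaluation of `SLs(2k+3; π/3)`. -/
theorem stmt11 (k : ℕ) :
    (-1 : ℝ) ^ k * ∫ θ in (0:ℝ)..(π / 3),
        (θ - π / 3) ^ (2 * k + 1) * Real.log |2 * Real.sin (θ / 2)| =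
      -(1 / 2) * (Nat.factorial (2 * k + 1)) *
          (1 - (2 : ℝ) ^ (-2 * (k : ℤ) - 2)) * (1 - (3 : ℝ) ^ (-2 * (k : ℤ) - 2)) *
          zetaR (2 * k + 3) +
        (Nat.factorial (2 * k + 1)) *
          ∑ m ∈ Finset.range (k + 1),
            (-1 : ℝ) ^ m * (π / 3) ^ (2 * m) * zetaR (2 * k + 3 - 2 * m) /
              (Nat.factorial (2 * m)) := by
  have hsq : ((-1 : ℝ) ^ k) * (-1) ^ k = 1 := by rw [← mul_pow]; norm_num
  have h := (hasSum_moment k).mul_left ((-1 : ℝ) ^ k)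
  simp only [← mul_assoc, hsq, one_mul] at h
  rw [integral_mul_log_two_sin (fun θ => (θ - π / 3) ^ (2 * k + 1)) (by fun_prop) h]
  have e : ∀ c : ℝ, c ≠ 0 → c ^ (-2 * (k : ℤ) - 2) = c / c ^ (2 * k + 3) := by
    intro c hc
    rw [show -2 * (k : ℤ) - 2 = 1 - ((2 * k + 3 : ℕ) : ℤ) by push_cast; ring, zpow_sub₀ hc,
      zpow_one, zpow_natCast]
  rw [e 2 (by norm_num), e 3 (by norm_num)]
  have hs : ∑ m ∈ Finset.range (k + 1), (-1 : ℝ) ^ m * (π / 3) ^ (2 * m) *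
      zetaR (2 * k + 3 - 2 * m) / (Nat.factorial (2 * m)) =
      ∑ m ∈ Finset.range (k + 1), (-1) ^ m * (π / 3) ^ (2 * m) / (Nat.factorial (2 * m)) *
          zetaR (2 * k + 3 - 2 * m) :=
    Finset.sum_congr rfl fun m _ => by ring
  rw [hs]
  linear_combination (-(Nat.factorial (2 * k + 1) : ℝ) *
    (1 / 2 * (1 - 2 / 2 ^ (2 * k + 3)) * (1 - 3 / 3 ^ (2 * k + 3)) * zetaR (2 * k + 3) -
        ∑ m ∈ Finset.range (k + 1), (-1) ^ m * (π / 3) ^ (2 * m) / (Nat.factorial (2 * m)) *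
          zetaR (2 * k + 3 - 2 * m))) * hsq
end
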